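/- Let A_n be d×m real matrices with A_n → A_0, let h_n ∈ ℝ^d with h_n ≥ 0 componentwise and h_n → h_0 componentwise in [0,∞], and let x_n → x_0 in ℝ^m. Suppose poly(A_0,h_0) is nonempty and poly(A_n,h_n) Kuratowski-converges to poly(A_0,h_0). Then μ*(x_n;A_n,h_n) → μ*(x_0;A_0,h_0), where μ*(x;A,h) denotes the unique point of the nonempty closed convex set poly(A,h) nearest to x in Euclidean norm. -/

import Mathlib

/-!
The projections `μ n` are bounded: nearness to `x n` makes `dist (x n) (μ n)` at most
`dist (x n) (y n)` for a sequence `y n → μ₀` of points of the moving polyhedra, which the first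
half of Kuratowski convergence supplies. Hence every subsequence has a convergent further
subsequence. Its limit lies in the limit polyhedron by the second half of Kuratowski convergence,
and passing to the limit in the inequality shows that it is at most as far from `x₀` as `μ₀` is.
A nearest point of a convex set is unique (`eq_of_nearest`), so the limit is `μ₀`.
-/

open Filter Topology
open scoped RealInnerProductSpace ENNReal

noncomputable section

/-- The polyhedron `{x : ⟪A j, x⟫ ≤ h j for all j}` with real right-hand sides. -/
def polyR {d m : ℕ} (A : Fin d → EuclideanSpace ℝ (Fin m)) (h : Fin d → ℝ) :
    Set (EuclideanSpace ℝ (Fin m)) :=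
  {x | ∀ j, ⟪A j, x⟫ ≤ h j}

/-- The polyhedron with right-hand sides in `[0,∞]`: only the constraints with a finite
right-hand side are imposed. -/
def polyE {d m : ℕ} (A : Fin d → EuclideanSpace ℝ (Fin m)) (h : Fin d → ℝ≥0∞) :
    Set (EuclideanSpace ℝ (Fin m)) :=
  {x | ∀ j, h j ≠ ⊤ → ⟪A j, x⟫ ≤ (h j).toReal}

/-- Kuratowski convergence of a sequence of subsets of a topological space. -/
def KuratowskiTendsto {E : Type*} [TopologicalSpace E] (S : ℕ → Set E) (S₀ : Set E) : Prop :=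
  (∀ x₀ ∈ S₀, ∃ x : ℕ → E, (∀ n, x n ∈ S n) ∧ Tendsto x atTop (nhds x₀)) ∧
    ∀ (φ : ℕ → ℕ), StrictMono φ → ∀ (x : ℕ → E) (x₀ : E),
      (∀ q, x q ∈ S (φ q)) → Tendsto x atTop (nhds x₀) → x₀ ∈ S₀

end

theorem convex_polyE {d m : ℕ} (A : Fin d → EuclideanSpace ℝ (Fin m)) (h : Fin d → ℝ≥0∞) :
    Convex ℝ (polyE A h) := by
  intro u hu v hv a b ha hb hab j hj
  have h1 := mul_le_mul_of_nonneg_left (hu j hj) ha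
  have h2 := mul_le_mul_of_nonneg_left (hv j hj) hb
  rw [inner_add_right, real_inner_smul_right, real_inner_smul_right]
  calc a * ⟪A j, u⟫ + b * ⟪A j, v⟫ ≤ a * (h j).toReal + b * (h j).toReal := add_le_add h1 h2
    _ = (h j).toReal := by rw [← add_mul, hab, one_mul]

/-- Uniqueness of the nearest point of a convex set, by the parallelogram law applied to
`x - u` and `x - v`: the midpoint of `u` and `v` is in the set, so it is no nearer to `x`. -/
theorem eq_of_nearest {E : Type*} [NormedAddCommGroup E] [InnerProductSpace ℝ E] {S : Set E}
    (hS : Convex ℝ S) {x u v : E} (hu : u ∈ S) (hv : v ∈ S)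
    (hmin : ∀ y ∈ S, dist x v ≤ dist x y) (huv : dist x u ≤ dist x v) : u = v := by
  have hmid := hmin _ (hS hu hv (by norm_num : (0 : ℝ) ≤ 1 / 2) (by norm_num : (0 : ℝ) ≤ 1 / 2)
    (by norm_num))
  have hpar := parallelogram_law_with_norm ℝ (x - u) (x - v)
  have hsum : (x - u) + (x - v) = (2 : ℝ) • (x - ((1 / 2 : ℝ) • u + (1 / 2 : ℝ) • v)) := by
    module
  have hdiff : (x - u) - (x - v) = v - u := by abel
  rw [hsum, hdiff, norm_smul, Real.norm_two] at hpar
  simp only [dist_eq_norm] at hmid huv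
  have hvu : ‖v - u‖ = 0 := by
    nlinarith [norm_nonneg (x - u), norm_nonneg (x - v), norm_nonneg (v - u),
      mul_self_le_mul_self (norm_nonneg _) hmid, mul_self_le_mul_self (norm_nonneg _) huv]
  exact (sub_eq_zero.mp (norm_eq_zero.mp hvu)).symm

/-- Convergence of projections along a Kuratowski-convergent sequence of
polyhedra: if `A_n → A₀`, `0 ≤ h_n → h₀` componentwise in `[0,∞]`, `x_n → x₀`,
`poly(A₀,h₀)` is nonempty and `poly(A_n,h_n)` Kuratowski-converges to `poly(A₀,h₀)`, then
the Euclidean projections `μ*(x_n; A_n, h_n)` converge to `μ*(x₀; A₀, h₀)`. -/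
theorem statement15 {d m : ℕ}
    (A : ℕ → Fin d → EuclideanSpace ℝ (Fin m)) (A₀ : Fin d → EuclideanSpace ℝ (Fin m))
    (hA : Tendsto A atTop (nhds A₀))
    (h : ℕ → Fin d → ℝ) (hnn : ∀ n j, 0 ≤ h n j) (h₀ : Fin d → ℝ≥0∞)
    (hh : ∀ j, Tendsto (fun n => ENNReal.ofReal (h n j)) atTop (nhds (h₀ j)))
    (x : ℕ → EuclideanSpace ℝ (Fin m)) (x₀ : EuclideanSpace ℝ (Fin m))
    (hx : Tendsto x atTop (nhds x₀))
    (hne : (polyE A₀ h₀).Nonempty)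
    (hK : KuratowskiTendsto (fun n => polyR (A n) (h n)) (polyE A₀ h₀))
    (μ : ℕ → EuclideanSpace ℝ (Fin m))
    (hμ : ∀ n, μ n ∈ polyR (A n) (h n) ∧
      ∀ y ∈ polyR (A n) (h n), dist (x n) (μ n) ≤ dist (x n) y)
    (μ₀ : EuclideanSpace ℝ (Fin m))
    (hμ₀ : μ₀ ∈ polyE A₀ h₀ ∧ ∀ y ∈ polyE A₀ h₀, dist x₀ μ₀ ≤ dist x₀ y) :
    Tendsto μ atTop (nhds μ₀) := by
  obtain ⟨y, hyS, hy⟩ := hK.1 μ₀ hμ₀.1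
  have hle : ∀ n, dist (x n) (μ n) ≤ dist (x n) (y n) := fun n => (hμ n).2 _ (hyS n)
  have hxy : Tendsto (fun n => dist (x n) (y n)) atTop (nhds (dist x₀ μ₀)) := hx.dist hy
  obtain ⟨C, hC⟩ := hxy.bddAbove_range
  obtain ⟨R, hR⟩ := (hx.dist (tendsto_const_nhds (x := x₀))).bddAbove_range
  have hball : ∀ n, μ n ∈ Metric.closedBall x₀ (C + R) := by
    intro n
    have h1 : dist (x n) (y n) ≤ C := hC ⟨n, rfl⟩
    have h2 : dist (x n) x₀ ≤ R := hR ⟨n, rfl⟩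
    rw [Metric.mem_closedBall]
    linarith [dist_triangle (μ n) (x n) x₀, dist_comm (μ n) (x n), hle n]
  refine tendsto_of_subseq_tendsto fun ns hns => ?_
  -- Kuratowski convergence speaks of strictly increasing index sequences only.
  obtain ⟨φ, -, hφ⟩ := strictMono_subseq_of_tendsto_atTop hns
  obtain ⟨z, -, ψ, hψ, hz⟩ := (isCompact_closedBall x₀ (C + R)).tendsto_subseq
    (x := fun q => μ (ns (φ q))) fun q => hball _
  have hmono : StrictMono fun q => ns (φ (ψ q)) := hφ.comp hψ
  have hzS : z ∈ polyE A₀ h₀ := hK.2 _ hmono _ z (fun q => (hμ _).1) hz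
  have hzle : dist x₀ z ≤ dist x₀ μ₀ :=
    le_of_tendsto_of_tendsto' ((hx.comp hmono.tendsto_atTop).dist hz)
      (hxy.comp hmono.tendsto_atTop) fun q => hle _
  have hzμ : z = μ₀ := eq_of_nearest (convex_polyE A₀ h₀) hzS hμ₀.1 hμ₀.2 hzle
  exact ⟨fun q => φ (ψ q), hzμ ▸ hz⟩
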